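/- arXiv:0805.0670 — 2 statements merged into one kernel-verified Lean document; each statement's English description precedes it below -/
import Mathlib

section
/- Let 0 ≤ m ≤ n and 0 ≤ k ≤ min{n−m, m}. For all f1, f2 ∈ S^{n−k,k} one has ⟨R_{m−k} f1, R_{m−k} f2⟩_{M^{n−m,m}} = C(n−2k, m−k)·⟨f1, f2⟩_{M^{n−k,k}}; in particular the restriction of R_{m−k} to S^{n−k,k} is injective into M^{n−m,m}. -/
/-!
The proof is the `sl₂`-argument for the Boolean lattice. The operators `dR` and `dS` are adjoint for
`ip` (`ip_dS`), they satisfy `dR dS - dS dR = n - 2|B|` pointwise (`dR_dS`), and `RT` is the divided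
power of `dS`: `dS (RT q f) = (q + 1) RT (q + 1) f` (`dS_RT`). For `f` in the kernel of `dR` and
supported on `k`-sets, induction on `q` turns the commutation relation into
`dR (RT (q + 1) f) = (n - 2k - q) RT q f` (`dR_RT_succ`). Hence
`(q + 1) ⟨RT (q + 1) f₁, RT (q + 1) f₂⟩ = (n - 2k - q) ⟨RT q f₁, RT q f₂⟩`, which is the recursion
of the binomial coefficients `C(n - 2k, q)` (`ip_RT`). Injectivity follows by applying the identity
to `f₁ - f₂`, as `m - k ≤ n - 2k` makes the binomial coefficient nonzero and `ip` is definite.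
-/

open Finset

noncomputable section

/-- The Radon transform `d : M^{n-m,m} → M^{n-m+1,m-1}`, `(df)(B) = ∑_{x ∉ B} f(B ∪ {x})`. -/
def dR (n : ℕ) (f : Finset (Fin n) → ℂ) : Finset (Fin n) → ℂ :=
  fun B => ∑ x ∈ Bᶜ, f (insert x B)

/-- The adjoint Radon transform `d* : M^{n-m,m} → M^{n-m-1,m+1}`. -/
def dS (n : ℕ) (f : Finset (Fin n) → ℂ) : Finset (Fin n) → ℂ :=
  fun B => ∑ x ∈ B, f (B.erase x)

/-- `R_q = (d*)^q / q!`, i.e. `(R_q f)(B) = ∑_{A ⊆ B, |A| = |B| - q} f(A)`. -/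
def RT (n q : ℕ) (f : Finset (Fin n) → ℂ) : Finset (Fin n) → ℂ :=
  fun B => if q ≤ B.card then ∑ A ∈ B.powersetCard (B.card - q), f A else 0

/-- Pochhammer symbol `(t)_p = t(t+1)⋯(t+p-1)`. -/
def poch (t : ℤ) (p : ℕ) : ℤ := ∏ i ∈ Finset.range p, (t + i)

/-- Dunkl-normalized Hahn polynomial value `E_m(a,b,c,x)`. -/
def hahnE (m : ℕ) (a b c x : ℤ) : ℤ :=
  ∑ j ∈ Finset.Icc (max 0 (x - c + m)) (min (m : ℤ) x),
    (-1) ^ j.toNat * (m.choose j.toNat : ℤ) * poch (b - m + 1) j.toNat * poch (-x) j.toNat *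
      poch (a - m + 1) (m - j.toNat) * poch (x - c) (m - j.toNat)

/-- Inner product `⟨f, g⟩ = ∑ f(s) conj (g s)`. -/
def ip (n : ℕ) (f g : Finset (Fin n) → ℂ) : ℂ :=
  ∑ s : Finset (Fin n), f s * (starRingEnd ℂ) (g s)

/-- Action of `S_n`: `(g · f)(ω) = f (g⁻¹ ω)`. -/
def permAct (n : ℕ) (g : Equiv.Perm (Fin n)) (f : Finset (Fin n) → ℂ) :
    Finset (Fin n) → ℂ :=
  fun s => f (s.image ⇑g⁻¹)

/-- The block `{o+1, …, o+a}` of the ground set `{1, …, n}` (0-indexed: positions `o ≤ x < o+a`). -/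
def block (n o a : ℕ) : Finset (Fin n) :=
  Finset.filter (fun x => o ≤ (x : ℕ) ∧ (x : ℕ) < o + a) Finset.univ

/-- Tensor product relative to the partition `A = {1,…,h}`, `B = {h+1,…,n}`:
`(φ ⊗ ψ)(Z) = φ(Z ∩ A) · ψ(Z ∩ B)`. -/
def tens (n h : ℕ) (φ ψ : Finset (Fin n) → ℂ) : Finset (Fin n) → ℂ :=
  fun Z => φ (Z ∩ block n 0 h) * ψ (Z ∩ block n h (n - h))

lemma RT_zero (n : ℕ) (f : Finset (Fin n) → ℂ) : RT n 0 f = f := by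
  funext B
  simp [RT]

/-- Each `A ⊆ B` with `|B \ A| = q + 1` is contained in `B.erase x` for exactly the `q + 1`
elements `x ∈ B \ A`. -/
lemma dS_RT (n q : ℕ) (f : Finset (Fin n) → ℂ) (B : Finset (Fin n)) :
    dS n (RT n q f) B = ((q : ℂ) + 1) * RT n (q + 1) f B := by
  unfold dS RT
  by_cases h : q + 1 ≤ B.card
  · have h1 : ∀ x ∈ B, (if q ≤ (B.erase x).card then
        ∑ A ∈ (B.erase x).powersetCard ((B.erase x).card - q), f A else 0)
        = ∑ A ∈ (B.erase x).powersetCard (B.card - (q + 1)), f A := by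
      intro x hx
      rw [card_erase_of_mem hx, if_pos (by omega)]
      congr 2
      omega
    rw [sum_congr rfl h1, if_pos h]
    rw [sum_comm' (t' := B.powersetCard (B.card - (q + 1))) (s' := fun A => B \ A)]
    · rw [mul_sum]
      refine sum_congr rfl fun A hA => ?_
      rw [mem_powersetCard] at hA
      have : (B \ A).card = q + 1 := by
        rw [card_sdiff_of_subset hA.1]
        omega
      rw [sum_const, this, nsmul_eq_mul]
      push_cast
      ring
    · intro x A
      simp only [mem_powersetCard, subset_erase, mem_sdiff]
      tauto
  · rw [if_neg h, mul_zero]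
    refine sum_eq_zero fun x hx => ?_
    have := card_pos.2 ⟨x, hx⟩
    rw [card_erase_of_mem hx, if_neg (by omega)]

lemma RT_support {n k : ℕ} {f : Finset (Fin n) → ℂ}
    (hf : ∀ s : Finset (Fin n), s.card ≠ k → f s = 0) (q : ℕ) (B : Finset (Fin n))
    (hB : B.card ≠ k + q) : RT n q f B = 0 := by
  unfold RT
  split_ifs with h
  · refine sum_eq_zero fun A hA => hf A ?_
    rw [mem_powersetCard] at hA
    omega
  · rfl

/-- The commutation relation `dR dS = dS dR + (n - 2|B|)`: the terms adding `x ∉ B` and removing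
`y ∈ B` agree on both sides, and the remaining terms contribute `n - |B|` and `|B|` copies of
`g B`. -/
lemma dR_dS (n : ℕ) (g : Finset (Fin n) → ℂ) (B : Finset (Fin n)) :
    dR n (dS n g) B = dS n (dR n g) B + ((n : ℂ) - 2 * B.card) * g B := by
  have h1 : dR n (dS n g) B
      = ((n : ℂ) - B.card) * g B + ∑ x ∈ Bᶜ, ∑ y ∈ B, g (insert x (B.erase y)) := by
    have : ∀ x ∈ Bᶜ, dS n g (insert x B) = g B + ∑ y ∈ B, g (insert x (B.erase y)) := by
      intro x hx
      rw [mem_compl] at hx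
      unfold dS
      rw [sum_insert hx, erase_insert hx]
      congr 1
      refine sum_congr rfl fun y hy => ?_
      rw [erase_insert_of_ne]
      rintro rfl
      exact hx hy
    rw [dR, sum_congr rfl this, sum_add_distrib, sum_const, card_compl, nsmul_eq_mul,
      Nat.cast_sub (card_le_univ B), Fintype.card_fin]
  have h2 : dS n (dR n g) B
      = (B.card : ℂ) * g B + ∑ y ∈ B, ∑ x ∈ Bᶜ, g (insert x (B.erase y)) := by
    have : ∀ y ∈ B, dR n g (B.erase y) = g B + ∑ x ∈ Bᶜ, g (insert x (B.erase y)) := by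
      intro y hy
      unfold dR
      rw [compl_erase, sum_insert (by simpa using hy), insert_erase hy]
    rw [dS, sum_congr rfl this, sum_add_distrib, sum_const, nsmul_eq_mul]
  rw [h1, h2, sum_comm]
  ring

lemma ip_dS (n : ℕ) (f g : Finset (Fin n) → ℂ) : ip n (dS n f) g = ip n f (dR n g) := by
  unfold ip dS dR
  simp only [map_sum, sum_mul, mul_sum]
  rw [sum_sigma', sum_sigma']
  refine sum_bij' (fun p _ => ⟨p.1.erase p.2, p.2⟩) (fun p _ => ⟨insert p.2 p.1, p.2⟩)
    ?_ ?_ ?_ ?_ ?_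
  · rintro ⟨B, x⟩ h
    simp
  · rintro ⟨B, x⟩ h
    simp
  · rintro ⟨B, x⟩ h
    have hx : x ∈ B := by simpa using h
    simp [insert_erase hx]
  · rintro ⟨B, x⟩ h
    have hx : x ∉ B := by simpa using h
    simp [erase_insert hx]
  · rintro ⟨B, x⟩ h
    have hx : x ∈ B := by simpa using h
    simp [insert_erase hx]

lemma dS_smul (n : ℕ) (c : ℂ) (f : Finset (Fin n) → ℂ) (B : Finset (Fin n)) :
    dS n (fun A => c * f A) B = c * dS n f B := by
  simp [dS, mul_sum]

lemma dR_smul (n : ℕ) (c : ℂ) (f : Finset (Fin n) → ℂ) (B : Finset (Fin n)) :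
    dR n (fun A => c * f A) B = c * dR n f B := by
  simp [dR, mul_sum]

/-- `dR` lowers the string of vectors `RT q f` generated by the lowest-weight vector `f`. -/
lemma dR_RT_succ {n k : ℕ} {f : Finset (Fin n) → ℂ}
    (hf : ∀ s : Finset (Fin n), s.card ≠ k → f s = 0) (hd : dR n f = 0) (q : ℕ)
    (B : Finset (Fin n)) :
    dR n (RT n (q + 1) f) B = ((n : ℂ) - 2 * k - q) * RT n q f B := by
  have hq : ∀ q : ℕ, (q : ℂ) + 1 ≠ 0 := fun q => Nat.cast_add_one_ne_zero q
  have hw : ∀ (q : ℕ) (B : Finset (Fin n)), ((n : ℂ) - 2 * B.card) * RT n q f B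
      = ((n : ℂ) - 2 * (k + q)) * RT n q f B := by
    intro q B
    by_cases hB : B.card = k + q
    · rw [hB]
      push_cast
      ring
    · rw [RT_support hf q B hB, mul_zero, mul_zero]
  have key : ∀ (q : ℕ) (B : Finset (Fin n)), ((q : ℂ) + 1) * dR n (RT n (q + 1) f) B
      = dS n (dR n (RT n q f)) B + ((n : ℂ) - 2 * (k + q)) * RT n q f B := by
    intro q B
    rw [← hw, ← dR_dS, ← dR_smul]
    congr 1
    funext A
    exact (dS_RT n q f A).symm
  induction q generalizing B with
  | zero =>
    have h := key 0 B
    have h0 : dS n (dR n (RT n 0 f)) B = 0 := by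
      rw [RT_zero, hd]
      simp [dS]
    rw [h0] at h
    simpa using h
  | succ q ih =>
    apply mul_left_cancel₀ (hq (q + 1))
    rw [key (q + 1) B, funext ih, dS_smul, dS_RT]
    push_cast
    ring

lemma ip_smul_left (n : ℕ) (c : ℂ) (f g : Finset (Fin n) → ℂ) :
    ip n (fun A => c * f A) g = c * ip n f g := by
  simp [ip, mul_sum, mul_assoc]

/-- By adjointness each `dS` on the left becomes a `dR` on the right, where `dR_RT_succ` evaluates
it; the resulting recursion in `q` is that of the binomial coefficients. -/
lemma ip_RT {n k : ℕ} (hk : 2 * k ≤ n) {f1 f2 : Finset (Fin n) → ℂ}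
    (hf2 : ∀ s : Finset (Fin n), s.card ≠ k → f2 s = 0) (hd2 : dR n f2 = 0) (q : ℕ) :
    ip n (RT n q f1) (RT n q f2) = ((n - 2 * k).choose q : ℂ) * ip n f1 f2 := by
  induction q with
  | zero => simp [RT_zero]
  | succ q ih =>
    apply mul_left_cancel₀ (Nat.cast_add_one_ne_zero q : (q : ℂ) + 1 ≠ 0)
    have hstep : ((q : ℂ) + 1) * ip n (RT n (q + 1) f1) (RT n (q + 1) f2)
        = ((n : ℂ) - 2 * k - q) * ip n (RT n q f1) (RT n q f2) := by
      rw [← ip_smul_left, ← funext (dS_RT n q f1), ip_dS, funext (dR_RT_succ hf2 hd2 q)]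
      simp only [ip, map_mul, map_sub, map_natCast, map_ofNat, mul_sum]
      exact sum_congr rfl fun _ _ => by ring
    have hch : ((n - 2 * k).choose (q + 1) : ℂ) * (q + 1)
        = ((n - 2 * k).choose q : ℂ) * ((n : ℂ) - 2 * k - q) := by
      by_cases h : q ≤ n - 2 * k
      · have := congrArg (Nat.cast : ℕ → ℂ) (Nat.choose_succ_right_eq (n - 2 * k) q)
        push_cast [Nat.cast_sub h, Nat.cast_sub hk] at this
        exact this
      -- Beyond the top of the string both binomial coefficients vanish.
      · rw [Nat.choose_eq_zero_of_lt (by omega : n - 2 * k < q + 1),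
          Nat.choose_eq_zero_of_lt (by omega : n - 2 * k < q)]
        simp
    rw [hstep, ih]
    linear_combination (-ip n f1 f2) * hch

lemma eq_zero_of_ip_self {n : ℕ} {f : Finset (Fin n) → ℂ} (h : ip n f f = 0) : f = 0 := by
  unfold ip at h
  simp only [Complex.mul_conj] at h
  have h' : ∑ s : Finset (Fin n), Complex.normSq (f s) = 0 := by exact_mod_cast h
  rw [sum_eq_zero_iff_of_nonneg fun _ _ => Complex.normSq_nonneg _] at h'
  funext s
  exact Complex.normSq_eq_zero.1 (h' s (mem_univ s))

/-- Theorem 2.2(2): `⟨R_{m-k} f₁, R_{m-k} f₂⟩ = C(n-2k, m-k) ⟨f₁, f₂⟩` on `S^{n-k,k}`;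
in particular `R_{m-k}` is injective on `S^{n-k,k}`. -/
theorem stmt4 (n m k : ℕ) (hn : 1 ≤ n) (hm : m ≤ n) (hk1 : k ≤ n - m) (hk2 : k ≤ m) :
    (∀ f1 f2 : Finset (Fin n) → ℂ,
      (∀ s : Finset (Fin n), s.card ≠ k → f1 s = 0) → dR n f1 = 0 →
      (∀ s : Finset (Fin n), s.card ≠ k → f2 s = 0) → dR n f2 = 0 →
      ip n (RT n (m - k) f1) (RT n (m - k) f2) =
        ((n - 2 * k).choose (m - k) : ℂ) * ip n f1 f2) ∧
    (∀ f1 f2 : Finset (Fin n) → ℂ,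
      (∀ s : Finset (Fin n), s.card ≠ k → f1 s = 0) → dR n f1 = 0 →
      (∀ s : Finset (Fin n), s.card ≠ k → f2 s = 0) → dR n f2 = 0 →
      RT n (m - k) f1 = RT n (m - k) f2 → f1 = f2) := by
  have hk : 2 * k ≤ n := by omega
  refine ⟨fun f1 f2 _ _ hf2 hd2 => ip_RT hk hf2 hd2 (m - k), ?_⟩
  intro f1 f2 hf1 hd1 hf2 hd2 h
  have hf : ∀ s : Finset (Fin n), s.card ≠ k → (f1 - f2) s = 0 := fun s hs => by
    simp [hf1 s hs, hf2 s hs]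
  have hd : dR n (f1 - f2) = 0 := by
    have : dR n (f1 - f2) = dR n f1 - dR n f2 := by
      funext B
      simp [dR]
    rw [this, hd1, hd2, sub_zero]
  have hR : RT n (m - k) (f1 - f2) = 0 := by
    have : RT n (m - k) (f1 - f2) = RT n (m - k) f1 - RT n (m - k) f2 := by
      funext B
      by_cases hB : m - k ≤ B.card <;> simp [RT, hB]
    rw [this, h, sub_self]
  have hip := ip_RT (f1 := f1 - f2) hk hf hd (m - k)
  have h0 : ip n (0 : Finset (Fin n) → ℂ) 0 = 0 := by simp [ip]
  rw [hR, h0] at hip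
  have hc : ((n - 2 * k).choose (m - k) : ℂ) ≠ 0 := by
    exact_mod_cast (Nat.choose_pos (by omega)).ne'
  exact sub_eq_zero.1 (eq_zero_of_ip_self ((mul_eq_zero.1 hip.symm).resolve_left hc))
end
end

section
/- Let 0 ≤ h ≤ n, 0 ≤ i ≤ h/2, 0 ≤ j ≤ (n−h)/2, and let k ≥ 0 be an integer. Let φ ∈ S^{h−i,i}(A) and ψ ∈ S^{n−h−j,j}(B) be nonzero. Consider the equation, in unknown complex coefficients α_l for max{i−h+k, j} ≤ l ≤ min{k−i, n−h−j}: d( Σ_l α_l · (R_{k−l−i}φ)⊗(R_{l−j}ψ) ) = 0, where d acts on M^{n−k,k}. This equation has a nontrivial solution if and only if k−h ≤ j−i ≤ n−h−k and i+j ≤ k; and when these conditions hold, the solutions are exactly α_l = α·E_{k−i−j}(n−h−2j, h−2i, k−i−j, l−j) for l = j, j+1, …, k−i, with α ∈ ℂ an arbitrary constant. -/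
/-!
For `φ` in the kernel of `d` on `i`-subsets of a ground set `S`, write `Tφ(B)` for the sum of `φ`
over all subsets of `B`; this is `(R_q φ)(B)` for `q = |B| - i`. Double counting gives
`∑_{x ∈ S \ B} Tφ(B ∪ {x}) = (|S| - |B| - i) Tφ(B)` (`sum_sumSubsets_insert`), that is,
`d R_{q+1} φ = (|S| - 2i - q) R_q φ`. It follows by induction that `R_q φ ≠ 0` for
`0 ≤ q ≤ |S| - 2i` (`exists_sumSubsets_ne_zero`).

Since `d` obeys a Leibniz rule on the blocks `A`, `B`, the value of
`d(∑_l α_l (R_{k-l-i} φ) ⊗ (R_{l-j} ψ))` at a `(k-1)`-set `Y` with `|Y ∩ A| = u`, `|Y ∩ B| = v` is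
`(α_v (h - u - i) + α_{v+1} (n - h - v - j)) Tφ(Y ∩ A) Tψ(Y ∩ B)`, with `α` extended by zero
(`dR_sum_tens`). By the nonvanishing result the equation is therefore equivalent to the two-term
recurrence in the bracket for all admissible `u + v + 1 = k` (`recurrence_of_eq`).

When the numerical conditions hold, all factors in the recurrence are positive, so the solution is
determined by `α_j`. The value `E_m(a,b,m,x)` reduces to the single product
`(-1)^{m-x} m! (b-m+1)_x (a-m+1)_{m-x}` (`hahnE_eq`), which satisfies the same recurrence. When one
of the conditions fails, the recurrence at one end of the index range has only one surviving term,
and the vanishing propagates through the range.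
-/

open Finset

noncomputable section

/-! ### Subset sums of functions in the kernel of `d` -/

/-- The sum of `φ` over all subsets of `B`. For `φ` supported on `i`-subsets this is the
value `(R_q φ)(B)` with `q = |B| - i`, without reference to `q`. -/
def sumSubsets {n : ℕ} (φ : Finset (Fin n) → ℂ) (B : Finset (Fin n)) : ℂ :=
  ∑ A ∈ B.powerset, φ A

lemma sumSubsets_eq_zero {n i : ℕ} {φ : Finset (Fin n) → ℂ}
    (hsupp : ∀ s : Finset (Fin n), s.card ≠ i → φ s = 0) {B : Finset (Fin n)}
    (hB : B.card < i) : sumSubsets φ B = 0 := by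
  refine Finset.sum_eq_zero fun A hA => hsupp A ?_
  have := Finset.card_le_card (Finset.mem_powerset.1 hA)
  omega

lemma sumSubsets_self {n i : ℕ} {φ : Finset (Fin n) → ℂ}
    (hsupp : ∀ s : Finset (Fin n), s.card ≠ i → φ s = 0) {B : Finset (Fin n)}
    (hB : B.card = i) : sumSubsets φ B = φ B := by
  refine Finset.sum_eq_single B (fun A hA hne => hsupp A fun hc => hne ?_) (by simp)
  exact Finset.eq_of_subset_of_card_le (Finset.mem_powerset.1 hA) (by omega)

lemma RT_eq {n i : ℕ} {φ : Finset (Fin n) → ℂ}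
    (hsupp : ∀ s : Finset (Fin n), s.card ≠ i → φ s = 0) (q : ℕ) (B : Finset (Fin n)) :
    RT n q φ B = if B.card = i + q then sumSubsets φ B else 0 := by
  unfold RT sumSubsets
  split_ifs with h1 h2 h2
  · refine Finset.sum_subset (fun A hA => ?_) (fun A hA hA' => hsupp A fun hc => hA' ?_)
    · exact Finset.mem_powerset.2 (Finset.mem_powersetCard.1 hA).1
    · exact Finset.mem_powersetCard.2 ⟨Finset.mem_powerset.1 hA, by omega⟩
  · refine Finset.sum_eq_zero fun A hA => hsupp A ?_
    have := (Finset.mem_powersetCard.1 hA).2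
    omega
  · omega
  · rfl

/-- Double counting of pairs `x ∈ A' ⊆ B`, with `A = A' \ {x}`. -/
lemma sum_powerset_insert_sdiff {n i : ℕ} {φ : Finset (Fin n) → ℂ}
    (hsupp : ∀ s : Finset (Fin n), s.card ≠ i → φ s = 0) (B : Finset (Fin n)) :
    ∑ A ∈ B.powerset, ∑ x ∈ B \ A, φ (insert x A) = i * sumSubsets φ B := by
  have h1 : (i : ℂ) * sumSubsets φ B = ∑ A ∈ B.powerset, ∑ _x ∈ A, φ A := by
    unfold sumSubsets
    rw [Finset.mul_sum]
    refine Finset.sum_congr rfl fun A _ => ?_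
    rw [Finset.sum_const, nsmul_eq_mul]
    by_cases hc : A.card = i
    · rw [hc]
    · rw [hsupp A hc]; simp
  rw [h1, Finset.sum_sigma', Finset.sum_sigma']
  refine Finset.sum_nbij' (fun p => ⟨insert p.2 p.1, p.2⟩) (fun p => ⟨p.1.erase p.2, p.2⟩)
    ?_ ?_ ?_ ?_ ?_
  · rintro ⟨A, x⟩ hp
    simp only [Finset.mem_sigma, Finset.mem_powerset, Finset.mem_sdiff] at hp ⊢
    exact ⟨Finset.insert_subset hp.2.1 hp.1, Finset.mem_insert_self _ _⟩
  · rintro ⟨A, x⟩ hp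
    simp only [Finset.mem_sigma, Finset.mem_powerset, Finset.mem_sdiff] at hp ⊢
    exact ⟨(Finset.erase_subset _ _).trans hp.1, hp.1 hp.2, Finset.notMem_erase _ _⟩
  · rintro ⟨A, x⟩ hp
    simp only [Finset.mem_sigma, Finset.mem_powerset, Finset.mem_sdiff] at hp ⊢
    rw [Finset.erase_insert hp.2.2]
  · rintro ⟨A, x⟩ hp
    simp only [Finset.mem_sigma, Finset.mem_powerset] at hp ⊢
    rw [Finset.insert_erase hp.2]
  · rintro ⟨A, x⟩ _
    rfl

/-- The formula `d R_{q+1} φ = (|S| - 2i - q) R_q φ` for `φ ∈ ker d` on the ground set `S`,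
evaluated at a set `B` with `|B| = i + q`. -/
lemma sum_sumSubsets_insert {n i : ℕ} {φ : Finset (Fin n) → ℂ} {S : Finset (Fin n)}
    (hsupp : ∀ s : Finset (Fin n), s.card ≠ i → φ s = 0)
    (hd : ∀ A ⊆ S, ∑ x ∈ S \ A, φ (insert x A) = 0) {B : Finset (Fin n)} (hB : B ⊆ S) :
    ∑ x ∈ S \ B, sumSubsets φ (insert x B) = ((S.card : ℂ) - B.card - i) * sumSubsets φ B := by
  have h1 : ∑ x ∈ S \ B, sumSubsets φ (insert x B)
      = ∑ x ∈ S \ B, (sumSubsets φ B + ∑ A ∈ B.powerset, φ (insert x A)) :=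
    Finset.sum_congr rfl fun x hx => Finset.sum_powerset_insert (Finset.mem_sdiff.1 hx).2 _
  have h2 : ∑ x ∈ S \ B, ∑ A ∈ B.powerset, φ (insert x A) = -(i * sumSubsets φ B) := by
    rw [Finset.sum_comm, ← sum_powerset_insert_sdiff hsupp, ← Finset.sum_neg_distrib]
    refine Finset.sum_congr rfl fun A hA => ?_
    have hAB := Finset.mem_powerset.1 hA
    rw [eq_neg_iff_add_eq_zero, ← hd A (hAB.trans hB), ← Finset.sum_union]
    · congr 1
      ext x
      have := @hAB x
      have := @hB x
      simp only [Finset.mem_union, Finset.mem_sdiff]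
      tauto
    · refine Finset.disjoint_left.2 fun x hx hx' => ?_
      exact (Finset.mem_sdiff.1 hx).2 (Finset.mem_sdiff.1 hx').1
  rw [h1, Finset.sum_add_distrib, h2, Finset.sum_const, nsmul_eq_mul, Finset.card_sdiff_of_subset hB,
    Nat.cast_sub (Finset.card_le_card hB)]
  ring

/-- `R_q φ ≠ 0` for `0 ≤ q ≤ |S| - 2i`: by induction on `m = i + q`, since `R_{q+1} φ = 0` would
force `(|S| - 2i - q) R_q φ = 0`. -/
lemma exists_sumSubsets_ne_zero {n i : ℕ} {φ : Finset (Fin n) → ℂ} {S : Finset (Fin n)}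
    (hsupp : ∀ s : Finset (Fin n), ¬(s ⊆ S ∧ s.card = i) → φ s = 0)
    (hd : ∀ A ⊆ S, ∑ x ∈ S \ A, φ (insert x A) = 0) (h0 : φ ≠ 0)
    {m : ℕ} (him : i ≤ m) (hm : m + i ≤ S.card) :
    ∃ B ⊆ S, B.card = m ∧ sumSubsets φ B ≠ 0 := by
  have hsupp' : ∀ s : Finset (Fin n), s.card ≠ i → φ s = 0 := fun s hs => hsupp s fun h => hs h.2
  induction m, him using Nat.le_induction with
  | base =>
    obtain ⟨B, hB⟩ := Function.ne_iff.1 h0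
    have hBS : B ⊆ S ∧ B.card = i := by
      by_contra hc
      exact hB (hsupp B hc)
    exact ⟨B, hBS.1, hBS.2, by rwa [sumSubsets_self hsupp' hBS.2]⟩
  | succ m him ih =>
    obtain ⟨B, hBS, hBm, hB⟩ := ih (by omega)
    by_contra! hc
    have h1 := sum_sumSubsets_insert hsupp' hd hBS
    rw [Finset.sum_eq_zero] at h1
    · have h2 : ((S.card : ℂ) - B.card - i) ≠ 0 := by
        rw [hBm, sub_sub, sub_ne_zero]
        norm_cast
        omega
      exact (mul_ne_zero h2 hB) h1.symm
    · intro x hx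
      rw [Finset.mem_sdiff] at hx
      refine hc _ (Finset.insert_subset hx.1 hBS) ?_
      rw [Finset.card_insert_of_notMem hx.2, hBm]

lemma sum_sdiff_insert_eq_zero {n i : ℕ} {φ : Finset (Fin n) → ℂ} {S : Finset (Fin n)}
    (hsupp : ∀ s : Finset (Fin n), ¬(s ⊆ S ∧ s.card = i) → φ s = 0) (hd : dR n φ = 0) :
    ∀ A ⊆ S, ∑ x ∈ S \ A, φ (insert x A) = 0 := by
  intro A _
  refine Eq.trans ?_ (congrFun hd A)
  unfold dR
  refine Finset.sum_subset (fun x hx => ?_) (fun x hx hx' => hsupp _ fun hc => hx' ?_)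
  · exact Finset.mem_compl.2 (Finset.mem_sdiff.1 hx).2
  · exact Finset.mem_sdiff.2 ⟨hc.1 (Finset.mem_insert_self _ _), Finset.mem_compl.1 hx⟩

/-! ### The equation as a two-term recurrence -/

/-- The function `∑_l α_l (R_{k-l-i} φ) ⊗ (R_{l-j} ψ)`, at a `k`-set `Z` with `|Z ∩ B| = v`, is
`α_v` times the product of the subset sums of `φ` and `ψ`. -/
lemma sum_tens_eq {n h i j k : ℕ} {φ ψ : Finset (Fin n) → ℂ}
    (hφ : ∀ s : Finset (Fin n), s.card ≠ i → φ s = 0)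
    (hψ : ∀ s : Finset (Fin n), s.card ≠ j → ψ s = 0)
    (I : Finset ℤ) (hI : ∀ l ∈ I, (j : ℤ) ≤ l ∧ l ≤ (k : ℤ) - i) (α : ℤ → ℂ)
    (Z : Finset (Fin n)) :
    ∑ l ∈ I, α l * tens n h (RT n ((k : ℤ) - l - i).toNat φ) (RT n (l - j).toNat ψ) Z
      = if (Z ∩ block n 0 h).card + (Z ∩ block n h (n - h)).card = k then
          (if ((Z ∩ block n h (n - h)).card : ℤ) ∈ I then
            α (Z ∩ block n h (n - h)).card else 0) *
          (sumSubsets φ (Z ∩ block n 0 h) * sumSubsets ψ (Z ∩ block n h (n - h))) else 0 := by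
  set U := Z ∩ block n 0 h with hU
  set V := Z ∩ block n h (n - h) with hV
  have key : ∀ l ∈ I, α l * tens n h (RT n ((k : ℤ) - l - i).toNat φ) (RT n (l - j).toNat ψ) Z
      = if (V.card : ℤ) = l then (if U.card + V.card = k then
          α V.card * (sumSubsets φ U * sumSubsets ψ V) else 0) else 0 := by
    intro l hl
    have := hI l hl
    unfold tens
    rw [← hU, ← hV, RT_eq hφ, RT_eq hψ]
    by_cases h1 : (V.card : ℤ) = l
    · subst h1
      rw [if_pos rfl, if_pos (show V.card = j + ((V.card : ℤ) - j).toNat by omega)]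
      by_cases h2 : U.card + V.card = k
      · rw [if_pos h2, if_pos (by omega)]
      · rw [if_neg h2, if_neg (by omega)]; simp
    · rw [if_neg h1, if_neg (show ¬ V.card = j + (l - j).toNat by omega)]; simp
  rw [Finset.sum_congr rfl key, Finset.sum_ite_eq]
  split_ifs <;> simp

/-- Leibniz rule for `d` along the splitting of the ground set into two disjoint blocks, applied to
the functions of `sum_tens_eq`. -/
lemma dR_eq {n k : ℕ} {i j : ℕ} {φ ψ : Finset (Fin n) → ℂ} {S T : Finset (Fin n)}
    (hST : Disjoint S T) (hU : ∀ x, x ∈ S ∨ x ∈ T)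
    (hφ : ∀ s : Finset (Fin n), s.card ≠ i → φ s = 0)
    (hψ : ∀ s : Finset (Fin n), s.card ≠ j → ψ s = 0)
    (hφd : ∀ A ⊆ S, ∑ x ∈ S \ A, φ (insert x A) = 0)
    (hψd : ∀ A ⊆ T, ∑ x ∈ T \ A, ψ (insert x A) = 0)
    (β : ℕ → ℂ) (Y : Finset (Fin n)) :
    dR n (fun Z => if (Z ∩ S).card + (Z ∩ T).card = k then
        β (Z ∩ T).card * (sumSubsets φ (Z ∩ S) * sumSubsets ψ (Z ∩ T)) else 0) Y
      = if (Y ∩ S).card + (Y ∩ T).card + 1 = k then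
          (β (Y ∩ T).card * ((S.card : ℂ) - (Y ∩ S).card - i)
            + β ((Y ∩ T).card + 1) * ((T.card : ℂ) - (Y ∩ T).card - j))
          * (sumSubsets φ (Y ∩ S) * sumSubsets ψ (Y ∩ T)) else 0 := by
  have hc : Yᶜ = (S \ (Y ∩ S)) ∪ (T \ (Y ∩ T)) := by
    ext x
    have := hU x
    simp only [Finset.mem_union, Finset.mem_sdiff, Finset.mem_inter, Finset.mem_compl]
    tauto
  have hdis : Disjoint (S \ (Y ∩ S)) (T \ (Y ∩ T)) :=
    hST.mono Finset.sdiff_subset Finset.sdiff_subset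
  have hS := sum_sumSubsets_insert hφ hφd (Finset.inter_subset_right : Y ∩ S ⊆ S)
  have hT := sum_sumSubsets_insert hψ hψd (Finset.inter_subset_right : Y ∩ T ⊆ T)
  unfold dR
  rw [hc, Finset.sum_union hdis]
  have e1 : ∀ x ∈ S \ (Y ∩ S), (if (insert x Y ∩ S).card + (insert x Y ∩ T).card = k then
        β (insert x Y ∩ T).card * (sumSubsets φ (insert x Y ∩ S) * sumSubsets ψ (insert x Y ∩ T))
        else 0) = (if (Y ∩ S).card + (Y ∩ T).card + 1 = k then
          β (Y ∩ T).card * sumSubsets ψ (Y ∩ T) else 0) * sumSubsets φ (insert x (Y ∩ S)) := by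
    intro x hx
    rw [Finset.mem_sdiff] at hx
    rw [Finset.insert_inter_of_mem hx.1,
      Finset.insert_inter_of_notMem (Finset.disjoint_left.1 hST hx.1),
      Finset.card_insert_of_notMem hx.2, Nat.add_right_comm]
    split_ifs <;> ring
  have e2 : ∀ x ∈ T \ (Y ∩ T), (if (insert x Y ∩ S).card + (insert x Y ∩ T).card = k then
        β (insert x Y ∩ T).card * (sumSubsets φ (insert x Y ∩ S) * sumSubsets ψ (insert x Y ∩ T))
        else 0) = (if (Y ∩ S).card + (Y ∩ T).card + 1 = k then
          β ((Y ∩ T).card + 1) * sumSubsets φ (Y ∩ S) else 0)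
            * sumSubsets ψ (insert x (Y ∩ T)) := by
    intro x hx
    rw [Finset.mem_sdiff] at hx
    rw [Finset.insert_inter_of_mem hx.1,
      Finset.insert_inter_of_notMem (Finset.disjoint_right.1 hST hx.1),
      Finset.card_insert_of_notMem hx.2, ← Nat.add_assoc]
    split_ifs <;> ring
  rw [Finset.sum_congr rfl e1, Finset.sum_congr rfl e2, ← Finset.mul_sum, ← Finset.mul_sum, hS, hT]
  split_ifs <;> ring

lemma card_block (n o a : ℕ) (h : o + a ≤ n) : (block n o a).card = a := by
  have : (block n o a).map Fin.valEmbedding = Finset.Ico o (o + a) := by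
    ext x
    simp only [block, Finset.mem_map, Finset.mem_filter, Finset.mem_univ, true_and,
      Fin.valEmbedding_apply, Finset.mem_Ico]
    constructor
    · rintro ⟨y, hy, rfl⟩
      exact hy
    · intro hx
      exact ⟨⟨x, by omega⟩, hx, rfl⟩
  rw [← Finset.card_map Fin.valEmbedding, this, Nat.card_Ico]
  omega

/-! ### The Hahn coefficients -/

/-- When `c = m` only the summand `j = x` survives in the defining sum. -/
lemma hahnE_eq (m : ℕ) (a b : ℤ) (p : ℕ) (hp : p ≤ m) :
    hahnE m a b m p = (-1) ^ (m - p) * (m.factorial : ℤ) * poch (b - m + 1) p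
      * poch (a - m + 1) (m - p) := by
  have poch_neg : ∀ r : ℕ, poch (-(r : ℤ)) r = (-1) ^ r * (r.factorial : ℤ) := by
    intro r
    unfold poch
    induction r with
    | zero => simp
    | succ r ih =>
      rw [Finset.prod_range_succ']
      have : ∀ t ∈ Finset.range r, (-((r + 1 : ℕ) : ℤ) + ((t + 1 : ℕ) : ℤ)) = -(r : ℤ) + t := by
        intro t _
        push_cast
        ring
      rw [Finset.prod_congr rfl this, ih, Nat.factorial_succ]
      push_cast
      ring
  unfold hahnE
  have hI : Finset.Icc (max 0 ((p : ℤ) - m + m)) (min (m : ℤ) p) = {(p : ℤ)} := by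
    ext x
    simp only [Finset.mem_Icc, Finset.mem_singleton]
    omega
  have hpm : (p : ℤ) - m = -((m - p : ℕ) : ℤ) := by omega
  rw [hI, Finset.sum_singleton, Int.toNat_natCast, poch_neg, hpm, poch_neg,
    ← Nat.choose_mul_factorial_mul_factorial hp]
  have : ((-1 : ℤ) ^ p) * (-1) ^ p = 1 := by
    rw [← mul_pow]; simp
  push_cast
  linear_combination ((m.choose p : ℤ) * poch (b - m + 1) p * p.factorial
    * poch (a - m + 1) (m - p) * (-1) ^ (m - p) * (m - p).factorial) * this

lemma hahnE_recurrence (m : ℕ) (a b : ℤ) (p : ℕ) (hp : p < m) :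
    hahnE m a b m p * (b - m + 1 + p) + hahnE m a b m (p + 1 : ℕ) * (a - p) = 0 := by
  rw [hahnE_eq m a b p hp.le, hahnE_eq m a b (p + 1) hp]
  obtain ⟨r, rfl⟩ : ∃ r, m = p + 1 + r := ⟨m - (p + 1), by omega⟩
  have e1 : p + 1 + r - p = r + 1 := by omega
  have e2 : p + 1 + r - (p + 1) = r := by omega
  rw [e1, e2]
  unfold poch
  rw [Finset.prod_range_succ, Finset.prod_range_succ]
  push_cast
  ring

lemma hahnE_zero_ne (m : ℕ) (a b : ℤ) (ha : (m : ℤ) ≤ a) : hahnE m a b m 0 ≠ 0 := by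
  have h := hahnE_eq m a b 0 (Nat.zero_le m)
  rw [Nat.cast_zero] at h
  rw [h]
  have h1 : poch (a - m + 1) (m - 0) ≠ 0 := by
    unfold poch
    refine Finset.prod_ne_zero_iff.2 fun t _ => ?_
    omega
  have h2 : poch (b - m + 1) 0 ≠ 0 := by simp [poch]
  have h3 : (m.factorial : ℤ) ≠ 0 := by exact_mod_cast m.factorial_ne_zero
  exact mul_ne_zero (mul_ne_zero (mul_ne_zero (by simp) h3) h2) h1

/-! ### Solving the equation -/

lemma dR_sum_tens {n h i j k : ℕ} (hh : h ≤ n) {φ ψ : Finset (Fin n) → ℂ}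
    (hφsupp : ∀ s : Finset (Fin n), ¬(s ⊆ block n 0 h ∧ s.card = i) → φ s = 0)
    (hφd : dR n φ = 0)
    (hψsupp : ∀ s : Finset (Fin n), ¬(s ⊆ block n h (n - h) ∧ s.card = j) → ψ s = 0)
    (hψd : dR n ψ = 0)
    (I : Finset ℤ) (hI : ∀ l ∈ I, (j : ℤ) ≤ l ∧ l ≤ (k : ℤ) - i) (α : ℤ → ℂ)
    {β : ℕ → ℂ} (hβ : ∀ v : ℕ, β v = if (v : ℤ) ∈ I then α v else 0) (Y : Finset (Fin n)) :
    dR n (fun Z => ∑ l ∈ I,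
        α l * tens n h (RT n ((k : ℤ) - l - i).toNat φ) (RT n (l - j).toNat ψ) Z) Y
      = if (Y ∩ block n 0 h).card + (Y ∩ block n h (n - h)).card + 1 = k then
          (β (Y ∩ block n h (n - h)).card * ((h : ℂ) - (Y ∩ block n 0 h).card - i)
            + β ((Y ∩ block n h (n - h)).card + 1)
              * (((n - h : ℕ) : ℂ) - (Y ∩ block n h (n - h)).card - j))
          * (sumSubsets φ (Y ∩ block n 0 h) * sumSubsets ψ (Y ∩ block n h (n - h))) else 0 := by
  have hφ' : ∀ s : Finset (Fin n), s.card ≠ i → φ s = 0 := fun s hs => hφsupp s fun h => hs h.2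
  have hψ' : ∀ s : Finset (Fin n), s.card ≠ j → ψ s = 0 := fun s hs => hψsupp s fun h => hs h.2
  have hST : Disjoint (block n 0 h) (block n h (n - h)) := by
    refine Finset.disjoint_left.2 fun x hx hx' => ?_
    simp only [block, Finset.mem_filter] at hx hx'
    omega
  have hU : ∀ x, x ∈ block n 0 h ∨ x ∈ block n h (n - h) := by
    intro x
    simp only [block, Finset.mem_filter, Finset.mem_univ, true_and]
    omega
  have h1 := dR_eq (k := k) hST hU hφ' hψ' (sum_sdiff_insert_eq_zero hφsupp hφd)
    (sum_sdiff_insert_eq_zero hψsupp hψd) β Y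
  rw [card_block n 0 h (by omega), card_block n h (n - h) (by omega)] at h1
  rw [← h1]
  congr 1
  funext Z
  rw [sum_tens_eq hφ' hψ' I hI, hβ]

/-- Evaluating the equation at a set `Y` where both subset sums are nonzero yields the recurrence
for the coefficients, extended by zero outside `I`. -/
lemma recurrence_of_eq {n h i j k : ℕ} (hh : h ≤ n) {φ ψ : Finset (Fin n) → ℂ}
    (hφsupp : ∀ s : Finset (Fin n), ¬(s ⊆ block n 0 h ∧ s.card = i) → φ s = 0)
    (hφd : dR n φ = 0) (hφ0 : φ ≠ 0)
    (hψsupp : ∀ s : Finset (Fin n), ¬(s ⊆ block n h (n - h) ∧ s.card = j) → ψ s = 0)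
    (hψd : dR n ψ = 0) (hψ0 : ψ ≠ 0)
    (I : Finset ℤ) (hI : ∀ l ∈ I, (j : ℤ) ≤ l ∧ l ≤ (k : ℤ) - i) (α : ℤ → ℂ)
    {β : ℕ → ℂ} (hβ : ∀ v : ℕ, β v = if (v : ℤ) ∈ I then α v else 0)
    (heq : dR n (fun Z => ∑ l ∈ I,
        α l * tens n h (RT n ((k : ℤ) - l - i).toNat φ) (RT n (l - j).toNat ψ) Z) = 0)
    (u v : ℕ) (huv : u + v + 1 = k) (hiu : i ≤ u) (huh : u + i ≤ h) (hjv : j ≤ v)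
    (hvn : v + j ≤ n - h) :
    β v * ((h : ℂ) - u - i) + β (v + 1) * (((n - h : ℕ) : ℂ) - v - j) = 0 := by
  have cS := card_block n 0 h (by omega)
  have cT := card_block n h (n - h) (by omega)
  have hST : Disjoint (block n 0 h) (block n h (n - h)) := by
    refine Finset.disjoint_left.2 fun x hx hx' => ?_
    simp only [block, Finset.mem_filter] at hx hx'
    omega
  obtain ⟨U, hUS, hUc, hU⟩ := exists_sumSubsets_ne_zero hφsupp
    (sum_sdiff_insert_eq_zero hφsupp hφd) hφ0 hiu (by omega)
  obtain ⟨V, hVT, hVc, hV⟩ := exists_sumSubsets_ne_zero hψsupp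
    (sum_sdiff_insert_eq_zero hψsupp hψd) hψ0 hjv (by omega)
  have h1 := dR_sum_tens hh hφsupp hφd hψsupp hψd I hI α hβ (U ∪ V)
  have eS : (U ∪ V) ∩ block n 0 h = U := by
    rw [Finset.union_inter_distrib_right, Finset.inter_eq_left.2 hUS,
      Finset.disjoint_iff_inter_eq_empty.1 (hST.symm.mono_left hVT), Finset.union_empty]
  have eT : (U ∪ V) ∩ block n h (n - h) = V := by
    rw [Finset.union_inter_distrib_right, Finset.inter_eq_left.2 hVT,
      Finset.disjoint_iff_inter_eq_empty.1 (hST.mono_left hUS), Finset.empty_union]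
  rw [heq, eS, eT, hUc, hVc, if_pos huv] at h1
  exact (mul_eq_zero.1 h1.symm).resolve_right (mul_ne_zero hU hV)

/-- Lemma 2.3: the equation `d(∑_l α_l (R_{k-l-i}φ) ⊗ (R_{l-j}ψ)) = 0` has a nontrivial
solution iff `k-h ≤ j-i ≤ n-h-k` and `i+j ≤ k`, in which case the solutions are exactly
`α_l = c · E_{k-i-j}(n-h-2j, h-2i, k-i-j, l-j)`. -/
theorem stmt6 (n h i j k : ℕ) (hn : 1 ≤ n) (hh : h ≤ n) (hi : 2 * i ≤ h)
    (hj : 2 * j ≤ n - h)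
    (φ ψ : Finset (Fin n) → ℂ)
    (hφsupp : ∀ s : Finset (Fin n), ¬(s ⊆ block n 0 h ∧ s.card = i) → φ s = 0)
    (hφd : dR n φ = 0) (hφ0 : φ ≠ 0)
    (hψsupp : ∀ s : Finset (Fin n), ¬(s ⊆ block n h (n - h) ∧ s.card = j) → ψ s = 0)
    (hψd : dR n ψ = 0) (hψ0 : ψ ≠ 0) :
    ((∃ α : ℤ → ℂ,
        (∃ l ∈ Finset.Icc (max ((i : ℤ) + k - h) (j : ℤ)) (min ((k : ℤ) - i) ((n : ℤ) - h - j)),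
          α l ≠ 0) ∧
        dR n (fun Z =>
          ∑ l ∈ Finset.Icc (max ((i : ℤ) + k - h) (j : ℤ)) (min ((k : ℤ) - i) ((n : ℤ) - h - j)),
            α l * tens n h (RT n ((k : ℤ) - l - i).toNat φ) (RT n (l - j).toNat ψ) Z) = 0)
      ↔ ((k : ℤ) - h ≤ (j : ℤ) - i ∧ (j : ℤ) - i ≤ (n : ℤ) - h - k ∧ i + j ≤ k)) ∧
    (((k : ℤ) - h ≤ (j : ℤ) - i ∧ (j : ℤ) - i ≤ (n : ℤ) - h - k ∧ i + j ≤ k) →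
      ∀ α : ℤ → ℂ,
        (dR n (fun Z =>
          ∑ l ∈ Finset.Icc (max ((i : ℤ) + k - h) (j : ℤ)) (min ((k : ℤ) - i) ((n : ℤ) - h - j)),
            α l * tens n h (RT n ((k : ℤ) - l - i).toNat φ) (RT n (l - j).toNat ψ) Z) = 0
        ↔ ∃ c : ℂ, ∀ l ∈ Finset.Icc ((j : ℤ)) ((k : ℤ) - i),
            α l = c * ((hahnE (k - i - j) ((n : ℤ) - h - 2 * j) ((h : ℤ) - 2 * i)
              ((k : ℤ) - i - j) (l - j) : ℤ) : ℂ))) := by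
  set I := Finset.Icc (max ((i : ℤ) + k - h) (j : ℤ)) (min ((k : ℤ) - i) ((n : ℤ) - h - j)) with hIdef
  have hI : ∀ l ∈ I, (j : ℤ) ≤ l ∧ l ≤ (k : ℤ) - i := by
    intro l hl
    rw [hIdef, Finset.mem_Icc] at hl
    omega
  have hsol : ((k : ℤ) - h ≤ (j : ℤ) - i ∧ (j : ℤ) - i ≤ (n : ℤ) - h - k ∧ i + j ≤ k) →
      ∀ α : ℤ → ℂ,
        (dR n (fun Z => ∑ l ∈ I,
            α l * tens n h (RT n ((k : ℤ) - l - i).toNat φ) (RT n (l - j).toNat ψ) Z) = 0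
        ↔ ∃ c : ℂ, ∀ l ∈ Finset.Icc ((j : ℤ)) ((k : ℤ) - i),
            α l = c * ((hahnE (k - i - j) ((n : ℤ) - h - 2 * j) ((h : ℤ) - 2 * i)
              ((k : ℤ) - i - j) (l - j) : ℤ) : ℂ)) := by
    rintro ⟨hc1, hc2, hc3⟩ α
    have hI' : I = Finset.Icc (j : ℤ) ((k : ℤ) - i) := by
      rw [hIdef, max_eq_right (by omega), min_eq_left (by omega)]
    obtain ⟨N, hN⟩ : ∃ N, k = i + j + N := ⟨k - i - j, by omega⟩
    have hN1 : k - i - j = N := by omega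
    have hN2 : (k : ℤ) - i - j = (N : ℤ) := by omega
    rw [hN1, hN2]
    set G : ℕ → ℂ := fun p =>
      ((hahnE N ((n : ℤ) - h - 2 * j) ((h : ℤ) - 2 * i) N (p : ℤ) : ℤ) : ℂ) with hG
    have hG0 : G 0 ≠ 0 := by
      have := hahnE_zero_ne N ((n : ℤ) - h - 2 * j) ((h : ℤ) - 2 * i) (by omega)
      simp only [hG, Nat.cast_zero]
      exact_mod_cast this
    have hnh : ((n - h : ℕ) : ℂ) = (n : ℂ) - h := Nat.cast_sub hh
    have hGrec : ∀ p < N, G p * ((h : ℂ) - 2 * i - N + 1 + p)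
        + G (p + 1) * ((n : ℂ) - h - 2 * j - p) = 0 := by
      intro p hp
      have := hahnE_recurrence N ((n : ℤ) - h - 2 * j) ((h : ℤ) - 2 * i) p hp
      have h2 := congrArg (Int.cast : ℤ → ℂ) this
      simp only [hG]
      push_cast at h2 ⊢
      exact h2
    have hmem : ∀ p ≤ N, ((j + p : ℕ) : ℤ) ∈ I := by
      intro p hp
      rw [hI', Finset.mem_Icc]
      omega
    constructor
    · intro heq
      refine ⟨α j / G 0, ?_⟩
      have main : ∀ p ≤ N, α ((j + p : ℕ) : ℤ) = α j / G 0 * G p := by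
        intro p
        induction p with
        | zero => intro _; field_simp; simp
        | succ p ih =>
          intro hp
          have ih := ih (by omega)
          have h1 := recurrence_of_eq hh hφsupp hφd hφ0 hψsupp hψd hψ0 I hI α
            (β := fun v : ℕ => if (v : ℤ) ∈ I then α v else 0) (fun v => rfl) heq
            (i + (N - (p + 1))) (j + p) (by omega) (by omega) (by omega)
            (by omega) (by omega)
          simp only [if_pos (hmem p (by omega)), Nat.add_assoc j p 1, if_pos (hmem (p + 1) hp)] at h1
          have h2 := hGrec p (by omega)
          have h3 : (n : ℂ) - h - 2 * j - p ≠ 0 := by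
            have : (n : ℤ) - h - 2 * j - p ≠ 0 := by omega
            exact_mod_cast this
          rw [hnh, ih] at h1
          push_cast [Nat.cast_sub hp] at h1
          push_cast
          apply mul_right_cancel₀ h3
          linear_combination h1 - (α j / G 0) * h2
      intro l hl
      rw [Finset.mem_Icc] at hl
      obtain ⟨p, rfl⟩ : ∃ p : ℕ, l = ((j + p : ℕ) : ℤ) := ⟨(l - j).toNat, by omega⟩
      rw [main p (by omega)]
      simp only [hG]
      congr 3
      push_cast
      ring
    · rintro ⟨c, hc⟩
      have main : ∀ p ≤ N, α ((j + p : ℕ) : ℤ) = c * G p := by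
        intro p hp
        rw [hc _ (by rw [← hI']; exact hmem p hp)]
        simp only [hG]
        congr 3
        push_cast
        ring
      funext Y
      rw [dR_sum_tens hh hφsupp hφd hψsupp hψd I hI α
        (β := fun v : ℕ => if (v : ℤ) ∈ I then α v else 0) (fun v => rfl) Y]
      set U := Y ∩ block n 0 h
      set V := Y ∩ block n h (n - h)
      rw [Pi.zero_apply]
      by_cases hk : U.card + V.card + 1 = k
      · rw [if_pos hk]
        by_cases hU : U.card < i
        · rw [sumSubsets_eq_zero (fun s hs => hφsupp s fun h => hs h.2) hU]; simp
        by_cases hV : V.card < j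
        · rw [sumSubsets_eq_zero (fun s hs => hψsupp s fun h => hs h.2) hV]; simp
        obtain ⟨p, hp⟩ : ∃ p, V.card = j + p := ⟨V.card - j, by omega⟩
        have hpN : p < N := by omega
        have hUc : (U.card : ℂ) = i + N - p - 1 := by
          have : (U.card : ℤ) = i + N - p - 1 := by omega
          exact_mod_cast congrArg (Int.cast : ℤ → ℂ) this
        simp only [hp, Nat.add_assoc j p 1, if_pos (hmem p hpN.le), if_pos (hmem (p + 1) hpN)]
        rw [main p hpN.le, main (p + 1) hpN, hUc, hnh]
        refine mul_eq_zero_of_left ?_ _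
        push_cast
        linear_combination c * hGrec p hpN
      · rw [if_neg hk]
  refine ⟨⟨?_, ?_⟩, hsol⟩
  · rintro ⟨α, ⟨l, hl, hαl⟩, heq⟩
    obtain ⟨β, hβ⟩ : ∃ β : ℕ → ℂ, ∀ v : ℕ, β v = if (v : ℤ) ∈ I then α v else 0 :=
      ⟨_, fun _ => rfl⟩
    have hrec := recurrence_of_eq hh hφsupp hφd hφ0 hψsupp hψd hψ0 I hI α hβ heq
    have hl' := hl
    rw [hIdef, Finset.mem_Icc] at hl'
    have hβI : ∀ v : ℕ, (v : ℤ) ∉ I → β v = 0 := fun v hv => by rw [hβ, if_neg hv]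
    -- Some coefficient is nonzero, so it suffices to show `β = 0` when a condition fails.
    have hne : ¬ ∀ v, β v = 0 := by
      intro hall
      have h1 := hall l.toNat
      have hlt : ((l.toNat : ℕ) : ℤ) = l := Int.toNat_of_nonneg (by omega)
      rw [hβ, hlt, if_pos hl] at h1
      exact hαl h1
    refine ⟨?_, ?_, by omega⟩
    · by_contra hcon
      -- The lowest index exceeds `j`; the recurrence kills the coefficients in increasing order.
      refine hne fun v => ?_
      induction v with
      | zero =>
        refine hβI _ fun hm => ?_
        rw [hIdef, Finset.mem_Icc] at hm
        omega
      | succ v ih =>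
        by_cases hm : ((v + 1 : ℕ) : ℤ) ∈ I
        · rw [hIdef, Finset.mem_Icc] at hm
          have h1 := hrec (k - (v + 1)) v (by omega) (by omega) (by omega) (by omega) (by omega)
          rw [ih, zero_mul, zero_add] at h1
          refine (mul_eq_zero.1 h1).resolve_right ?_
          rw [sub_sub, sub_eq_zero]
          norm_cast
          omega
        · exact hβI _ hm
    · by_contra hcon
      -- The highest index is below `k - i`; the coefficients vanish in decreasing order.
      have hdown : ∀ t v : ℕ, v + t = k + 1 → β v = 0 := by
        intro t
        induction t with
        | zero =>
          intro v hv
          refine hβI _ fun hm => ?_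
          rw [hIdef, Finset.mem_Icc] at hm
          omega
        | succ t ih =>
          intro v hv
          by_cases hm : (v : ℤ) ∈ I
          · rw [hIdef, Finset.mem_Icc] at hm
            have h1 := hrec (k - 1 - v) v (by omega) (by omega) (by omega) (by omega) (by omega)
            rw [ih (v + 1) (by omega), zero_mul, add_zero] at h1
            refine (mul_eq_zero.1 h1).resolve_right ?_
            rw [sub_sub, sub_eq_zero]
            norm_cast
            omega
          · exact hβI _ hm
      refine hne fun v => ?_
      by_cases hv : v ≤ k + 1
      · exact hdown (k + 1 - v) v (by omega)
      · refine hβI _ fun hm => ?_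
        rw [hIdef, Finset.mem_Icc] at hm
        omega
  · intro hcond
    refine ⟨fun l => ((hahnE (k - i - j) ((n : ℤ) - h - 2 * j) ((h : ℤ) - 2 * i)
              ((k : ℤ) - i - j) (l - j) : ℤ) : ℂ), ⟨j, ?_, ?_⟩, ?_⟩
    · rw [hIdef, Finset.mem_Icc]
      omega
    · have hN2 : (k : ℤ) - i - j = ((k - i - j : ℕ) : ℤ) := by omega
      have := hahnE_zero_ne (k - i - j) ((n : ℤ) - h - 2 * j) ((h : ℤ) - 2 * i) (by omega)
      beta_reduce
      rw [hN2, sub_self]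
      exact_mod_cast this
    · exact (hsol hcond _).2 ⟨1, fun l _ => (one_mul _).symm⟩
end
end
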